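/- Monotonicity of E_{x,p} in φ at fixed β₁: fix β₁ ∈ [0.33018, 0.52891], and for integers p ≥ 1 and x ≥ 2p define E_{x,p}(φ) = (U/V)^{x−2p}·(1 − V^{−p}) with U = U(φ, β₁), V = V(φ, β₁), on the interval J_{β₁} = ((2 − β₁)/3, 1 − 2β₁/3) of φ for which β₃ > 0 and β₂ > 0. Set φ* = (1/12)·[15 − 9/(2 − β₁) − 2β₁ − √3·(1 − β₁)·√(4β₁² + 4β₁ + 3)/(2 − β₁)]. Then: (i) for all integers p ≥ 1 and x ≥ 2p + 3, E_{x,p} is strictly increasing on J_{β₁}; (ii) for all p ≥ 1 and x ∈ {2p + 1, 2p + 2}, E_{x,p} is strictly increasing on J_{β₁} ∩ (−∞, φ*]. Moreover, as a function of β₁ on [0, 1], φ*(β₁) is decreasing, with φ*(0) = 3/4 and φ*(1) = 1/3. -/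

import Mathlib

/-- `U(φ, β₁) = 9(1−φ)β₃/(Y β₂)` where `β₂ = 3(1−φ) − 2β₁`, `β₃ = β₁ − 2 + 3φ`,
`Y = 3φ − β₁`. -/
noncomputable def Ufun (φ β₁ : ℝ) : ℝ :=
  9 * (1 - φ) * (β₁ - 2 + 3 * φ) / ((3 * φ - β₁) * (3 * (1 - φ) - 2 * β₁))

/-- `V(φ, β₁) = 1 + β₂²/(3 Y β₃)`. -/
noncomputable def Vfun (φ β₁ : ℝ) : ℝ :=
  1 + (3 * (1 - φ) - 2 * β₁) ^ 2 / (3 * (3 * φ - β₁) * (β₁ - 2 + 3 * φ))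

/-- The constraint polygon `D` for the pair `(φ, β₁)`. -/
def Dset : Set (ℝ × ℝ) :=
  {q | 0.525245 ≤ q.1 ∧ q.1 ≤ 0.619063 ∧ 0.33018 ≤ q.2 ∧ q.2 ≤ 0.52891 ∧
    0.33018 ≤ 3 * (1 - q.1) - 2 * q.2 ∧ 3 * (1 - q.1) - 2 * q.2 ≤ 0.52891 ∧
    0.077639 ≤ q.2 - 2 + 3 * q.1 ∧ q.2 - 2 + 3 * q.1 ≤ 0.21782}

/-- `φ* = (1/12)[15 − 9/(2 − β₁) − 2β₁ − √3(1 − β₁)√(4β₁² + 4β₁ + 3)/(2 − β₁)]`. -/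
noncomputable def phiStar (β₁ : ℝ) : ℝ :=
  (1 / 12) * (15 - 9 / (2 - β₁) - 2 * β₁ -
    Real.sqrt 3 * (1 - β₁) * Real.sqrt (4 * β₁ ^ 2 + 4 * β₁ + 3) / (2 - β₁))

/-!
At fixed `β₁` put `r = β₃`, `s = β₂`, `c = 1 - β₁ = r + s` and `M = 3r + s`. Then
`V = M² / (3 Y r)` and `3 Y r = M² - s²`, so that

  `U / V = 27 (1 - φ) r² / (s M²)`,  `1 - V⁻¹ = (s / M)²`,

with logarithmic derivatives `6 c / (r M) + 2 β₁ / (s (1 - φ))` and `-18 c / (s M)` in `φ`. Hence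
`(U / V) ^ k (1 - V⁻¹)` increases as long as `9 c r (1 - φ) < k (3 c s (1 - φ) + β₁ r M)`.

The remaining factors of `E`, a power of `U / V` and `1 + V⁻¹ + ⋯ + V ^ (1 - p)`, are positive and
increasing, which leaves the criterion to be checked for `k = 3` and `k = 1`. For `k = 3` it says
that `s (r² - s²) < β₁ (2 s² + r s + r²)`, and `β₁ > c / 7` suffices, since
`c (2 s² + r s + r²) - 7 s (r² - s²) = c (3 s - r)²`. For `k = 1` it is a quadratic inequality in
`φ` whose smaller root is `φ*`.
-/

lemma strictMonoOn_pow_mul_one_sub_pow {α R : Type*} [Preorder α] [CommRing R] [PartialOrder R]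
    [IsStrictOrderedRing R] {S : Set α} {w q : α → R} {k n p : ℕ}
    (hw : MonotoneOn w S) (hw₀ : ∀ x ∈ S, 0 < w x)
    (hq : MonotoneOn q S) (hq₀ : ∀ x ∈ S, 0 < q x) (hq₁ : ∀ x ∈ S, q x ≤ 1)
    (hkn : k ≤ n) (hp : p ≠ 0) (h : StrictMonoOn (fun x ↦ w x ^ k * (1 - q x)) S) :
    StrictMonoOn (fun x ↦ w x ^ n * (1 - q x ^ p)) S := by
  have factor (x : α) : w x ^ n * (1 - q x ^ p) =
      w x ^ k * (1 - q x) * (w x ^ (n - k) * ∑ i ∈ Finset.range p, q x ^ i) := by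
    rw [← mul_neg_geom_sum, ← pow_mul_pow_sub (w x) hkn]
    ring
  intro x hx y hy hxy
  have hpow : w x ^ (n - k) ≤ w y ^ (n - k) :=
    pow_le_pow_left₀ (hw₀ x hx).le (hw hx hy hxy.le) _
  have hsum : ∑ i ∈ Finset.range p, q x ^ i ≤ ∑ i ∈ Finset.range p, q y ^ i :=
    Finset.sum_le_sum fun i _ ↦ pow_le_pow_left₀ (hq₀ x hx).le (hq hx hy hxy.le) i
  have hsum_pos : 0 < ∑ i ∈ Finset.range p, q x ^ i :=
    Finset.sum_pos (fun i _ ↦ pow_pos (hq₀ x hx) i) (Finset.nonempty_range_iff.2 hp)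
  simp only [factor]
  exact mul_lt_mul (h hx hy hxy)
    (mul_le_mul hpow hsum hsum_pos.le (pow_pos (hw₀ y hy) _).le)
    (mul_pos (pow_pos (hw₀ x hx) _) hsum_pos)
    (mul_nonneg (pow_pos (hw₀ y hy) _).le (sub_nonneg.2 (hq₁ y hy)))

/-- The paper's `β₂`. -/
def beta₂ (φ β : ℝ) : ℝ := 3 * (1 - φ) - 2 * β

/-- The paper's `β₃`. -/
def beta₃ (φ β : ℝ) : ℝ := β - 2 + 3 * φ

/-- The paper's `Y`. -/
def Yfun (φ β : ℝ) : ℝ := 3 * φ - β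

/-- The quantity `M` with `V = M² / (3 Y β₃)`. -/
def Mfun (φ β : ℝ) : ℝ := 3 * beta₃ φ β + beta₂ φ β

/-- The paper's `E_{x,p}`, as a function of `φ` and `β₁`. The exponent `x - 2p` is truncated at `0`,
so this is the intended quantity only for `2p ≤ x`. -/
noncomputable def Efun (x p : ℕ) (φ β : ℝ) : ℝ :=
  (Ufun φ β / Vfun φ β) ^ (x - 2 * p) * (1 - Vfun φ β ^ (-(p : ℤ)))

/-- The interval `J_β` of those `φ` for which `β₃` and `β₂` are positive. It is empty if `1 ≤ β`. -/
def phiInterval (β : ℝ) : Set ℝ := Set.Ioo ((2 - β) / 3) (1 - 2 * β / 3)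

/-- The polynomial that carries the sign of the `φ`-derivative of `(U / V) ^ k * (1 - V⁻¹)`. -/
def derivSign (k : ℕ) (φ β : ℝ) : ℝ :=
  k * (3 * (1 - β) * beta₂ φ β * (1 - φ) + β * beta₃ φ β * Mfun φ β) -
    9 * (1 - β) * beta₃ φ β * (1 - φ)

section FixedBeta

variable {β φ : ℝ}

lemma beta₃_add_beta₂ (φ β : ℝ) : beta₃ φ β + beta₂ φ β = 1 - β := by
  unfold beta₃ beta₂
  ring

lemma beta₂_add_two_mul (φ β : ℝ) : beta₂ φ β + 2 * β = 3 * (1 - φ) := by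
  unfold beta₂
  ring

lemma mem_phiInterval_iff : φ ∈ phiInterval β ↔ 0 < beta₃ φ β ∧ 0 < beta₂ φ β := by
  unfold beta₃ beta₂
  constructor <;> rintro ⟨h₁, h₂⟩ <;> constructor <;> linarith

lemma lt_one_of_mem_phiInterval (hφ : φ ∈ phiInterval β) : β < 1 := by
  obtain ⟨hr, hs⟩ := mem_phiInterval_iff.1 hφ
  linarith [beta₃_add_beta₂ φ β]

lemma one_sub_pos_of_mem_phiInterval (hβ : 0 ≤ β) (hφ : φ ∈ phiInterval β) : 0 < 1 - φ := by
  linarith [beta₂_add_two_mul φ β, (mem_phiInterval_iff.1 hφ).2]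

lemma Yfun_pos (hφ : φ ∈ phiInterval β) : 0 < Yfun φ β := by
  have hr := (mem_phiInterval_iff.1 hφ).1
  have hβ := lt_one_of_mem_phiInterval hφ
  unfold beta₃ at hr
  unfold Yfun
  linarith

lemma Mfun_pos (hφ : φ ∈ phiInterval β) : 0 < Mfun φ β := by
  obtain ⟨hr, hs⟩ := mem_phiInterval_iff.1 hφ
  unfold Mfun
  positivity

lemma Mfun_sq (φ β : ℝ) : Mfun φ β ^ 2 = 3 * Yfun φ β * beta₃ φ β + beta₂ φ β ^ 2 := by
  unfold Mfun Yfun beta₃ beta₂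
  ring

lemma Vfun_eq (hφ : φ ∈ phiInterval β) :
    Vfun φ β = Mfun φ β ^ 2 / (3 * Yfun φ β * beta₃ φ β) := by
  have hr := (mem_phiInterval_iff.1 hφ).1
  have hY := Yfun_pos hφ
  rw [Mfun_sq, add_div, div_self (by positivity)]
  rfl

lemma Vfun_pos (hφ : φ ∈ phiInterval β) : 0 < Vfun φ β := by
  have hr := (mem_phiInterval_iff.1 hφ).1
  have hY := Yfun_pos hφ
  have hM := Mfun_pos hφ
  rw [Vfun_eq hφ]
  positivity

lemma one_sub_inv_Vfun (hφ : φ ∈ phiInterval β) :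
    1 - (Vfun φ β)⁻¹ = (beta₂ φ β / Mfun φ β) ^ 2 := by
  have hM := Mfun_pos hφ
  rw [Vfun_eq hφ, inv_div]
  field_simp
  linarith [Mfun_sq φ β]

lemma one_sub_inv_Vfun_pos (hφ : φ ∈ phiInterval β) : 0 < 1 - (Vfun φ β)⁻¹ := by
  have hs := (mem_phiInterval_iff.1 hφ).2
  have hM := Mfun_pos hφ
  rw [one_sub_inv_Vfun hφ]
  positivity

lemma Ufun_div_Vfun (hφ : φ ∈ phiInterval β) :
    Ufun φ β / Vfun φ β =
      27 * (1 - φ) * beta₃ φ β ^ 2 / (beta₂ φ β * Mfun φ β ^ 2) := by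
  obtain ⟨hr, hs⟩ := mem_phiInterval_iff.1 hφ
  have hY := Yfun_pos hφ
  have hM := Mfun_pos hφ
  have hU : Ufun φ β = 9 * (1 - φ) * beta₃ φ β / (Yfun φ β * beta₂ φ β) := rfl
  rw [hU, Vfun_eq hφ]
  field_simp
  ring

lemma Ufun_div_Vfun_pos (hβ : 0 ≤ β) (hφ : φ ∈ phiInterval β) : 0 < Ufun φ β / Vfun φ β := by
  obtain ⟨hr, hs⟩ := mem_phiInterval_iff.1 hφ
  have hM := Mfun_pos hφ
  have hφ₁ := one_sub_pos_of_mem_phiInterval hβ hφ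
  rw [Ufun_div_Vfun hφ]
  positivity

lemma hasDerivAt_beta₂ (φ β : ℝ) : HasDerivAt (fun t ↦ beta₂ t β) (-3) φ := by
  simpa [beta₂] using (((hasDerivAt_id φ).const_sub 1).const_mul 3).sub_const (2 * β)

lemma hasDerivAt_beta₃ (φ β : ℝ) : HasDerivAt (fun t ↦ beta₃ t β) 3 φ := by
  simpa [beta₃] using ((hasDerivAt_id φ).const_mul 3).const_add (β - 2)

lemma hasDerivAt_Mfun (φ β : ℝ) : HasDerivAt (fun t ↦ Mfun t β) 6 φ :=
  (((hasDerivAt_beta₃ φ β).const_mul 3).fun_add (hasDerivAt_beta₂ φ β)).congr_deriv (by norm_num)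

lemma hasDerivAt_Ufun_div_Vfun (hβ : 0 ≤ β) (hφ : φ ∈ phiInterval β) :
    HasDerivAt (fun t ↦ Ufun t β / Vfun t β)
      (Ufun φ β / Vfun φ β *
        (6 * (1 - β) / (beta₃ φ β * Mfun φ β) + 2 * β / (beta₂ φ β * (1 - φ)))) φ := by
  obtain ⟨hr, hs⟩ := mem_phiInterval_iff.1 hφ
  have hM := Mfun_pos hφ
  have hφ₁ := one_sub_pos_of_mem_phiInterval hβ hφ
  have heq : Set.EqOn (fun t ↦ Ufun t β / Vfun t β) _ (phiInterval β) := fun _ ↦ Ufun_div_Vfun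
  have hderiv := ((((hasDerivAt_id' φ).const_sub 1).const_mul 27).fun_mul
    ((hasDerivAt_beta₃ φ β).fun_pow 2)).fun_div
    ((hasDerivAt_beta₂ φ β).fun_mul ((hasDerivAt_Mfun φ β).fun_pow 2)) (by positivity)
  refine (hderiv.congr_of_eventuallyEq
    (heq.eventuallyEq_of_mem (isOpen_Ioo.mem_nhds hφ))).congr_deriv ?_
  rw [Ufun_div_Vfun hφ]
  field_simp
  unfold Mfun beta₃ beta₂
  ring

lemma hasDerivAt_one_sub_inv_Vfun (hφ : φ ∈ phiInterval β) :
    HasDerivAt (fun t ↦ 1 - (Vfun t β)⁻¹)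
      (-((1 - (Vfun φ β)⁻¹) * (18 * (1 - β) / (beta₂ φ β * Mfun φ β)))) φ := by
  have hs := (mem_phiInterval_iff.1 hφ).2
  have hM := Mfun_pos hφ
  have heq : Set.EqOn (fun t ↦ 1 - (Vfun t β)⁻¹) _ (phiInterval β) := fun _ ↦ one_sub_inv_Vfun
  have hderiv := ((hasDerivAt_beta₂ φ β).fun_div (hasDerivAt_Mfun φ β) hM.ne').fun_pow 2
  refine (hderiv.congr_of_eventuallyEq
    (heq.eventuallyEq_of_mem (isOpen_Ioo.mem_nhds hφ))).congr_deriv ?_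
  rw [one_sub_inv_Vfun hφ, ← beta₃_add_beta₂ φ β, Nat.add_one_sub_one, pow_one]
  field_simp
  unfold Mfun
  ring

lemma hasDerivAt_pow_mul_one_sub_inv_Vfun (hβ : 0 ≤ β) (hφ : φ ∈ phiInterval β) (k : ℕ) :
    HasDerivAt (fun t ↦ (Ufun t β / Vfun t β) ^ k * (1 - (Vfun t β)⁻¹))
      ((Ufun φ β / Vfun φ β) ^ k * (1 - (Vfun φ β)⁻¹) *
        (2 * derivSign k φ β / (beta₃ φ β * beta₂ φ β * (1 - φ) * Mfun φ β))) φ := by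
  obtain ⟨hr, hs⟩ := mem_phiInterval_iff.1 hφ
  have hM := Mfun_pos hφ
  have hφ₁ := one_sub_pos_of_mem_phiInterval hβ hφ
  have hpow (W L : ℝ) : k * W ^ (k - 1) * (W * L) = k * W ^ k * L := by
    cases k with
    | zero => simp
    | succ k => rw [Nat.add_sub_cancel, pow_succ]; ring
  refine (((hasDerivAt_Ufun_div_Vfun hβ hφ).fun_pow k).fun_mul
    (hasDerivAt_one_sub_inv_Vfun hφ)).congr_deriv ?_
  rw [hpow, derivSign]
  generalize Ufun φ β / Vfun φ β = W
  field_simp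
  ring

lemma strictMonoOn_pow_mul_one_sub_inv_Vfun (hβ : 0 ≤ β) {k : ℕ} {S : Set ℝ} (hS : Convex ℝ S)
    (hSJ : S ⊆ phiInterval β) (h : ∀ φ ∈ interior S, 0 < derivSign k φ β) :
    StrictMonoOn (fun t ↦ (Ufun t β / Vfun t β) ^ k * (1 - (Vfun t β)⁻¹)) S := by
  have hderiv (φ : ℝ) (hφ : φ ∈ S) := hasDerivAt_pow_mul_one_sub_inv_Vfun hβ (hSJ hφ) k
  refine strictMonoOn_of_hasDerivWithinAt_pos hS
    (fun φ hφ ↦ (hderiv φ hφ).continuousAt.continuousWithinAt)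
    (fun φ hφ ↦ (hderiv φ (interior_subset hφ)).hasDerivWithinAt) fun φ hφ ↦ ?_
  have hφJ := hSJ (interior_subset hφ)
  obtain ⟨hr, hs⟩ := mem_phiInterval_iff.1 hφJ
  have hM := Mfun_pos hφJ
  have hφ₁ := one_sub_pos_of_mem_phiInterval hβ hφJ
  have hW := Ufun_div_Vfun_pos hβ hφJ
  have hQ := one_sub_inv_Vfun_pos hφJ
  have hsign := h φ hφ
  positivity

lemma monotoneOn_Ufun_div_Vfun (hβ : 0 ≤ β) :
    MonotoneOn (fun t ↦ Ufun t β / Vfun t β) (phiInterval β) := by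
  have hderiv (φ : ℝ) (hφ : φ ∈ phiInterval β) := hasDerivAt_Ufun_div_Vfun hβ hφ
  refine monotoneOn_of_hasDerivWithinAt_nonneg (convex_Ioo _ _)
    (fun φ hφ ↦ (hderiv φ hφ).continuousAt.continuousWithinAt)
    (fun φ hφ ↦ (hderiv φ (interior_subset hφ)).hasDerivWithinAt) fun φ hφ ↦ ?_
  have hφJ := interior_subset hφ
  obtain ⟨hr, hs⟩ := mem_phiInterval_iff.1 hφJ
  have hM := Mfun_pos hφJ
  have hφ₁ := one_sub_pos_of_mem_phiInterval hβ hφJ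
  have hc : 0 < 1 - β := sub_pos.2 (lt_one_of_mem_phiInterval hφJ)
  have hW := Ufun_div_Vfun_pos hβ hφJ
  positivity

lemma antitoneOn_one_sub_inv_Vfun : AntitoneOn (fun t ↦ 1 - (Vfun t β)⁻¹) (phiInterval β) := by
  have hderiv (φ : ℝ) (hφ : φ ∈ phiInterval β) := hasDerivAt_one_sub_inv_Vfun hφ
  refine antitoneOn_of_hasDerivWithinAt_nonpos (convex_Ioo _ _)
    (fun φ hφ ↦ (hderiv φ hφ).continuousAt.continuousWithinAt)
    (fun φ hφ ↦ (hderiv φ (interior_subset hφ)).hasDerivWithinAt) fun φ hφ ↦ ?_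
  have hφJ := interior_subset hφ
  have hs := (mem_phiInterval_iff.1 hφJ).2
  have hM := Mfun_pos hφJ
  have hc : 0 < 1 - β := sub_pos.2 (lt_one_of_mem_phiInterval hφJ)
  have hQ := one_sub_inv_Vfun_pos hφJ
  exact neg_nonpos.2 (by positivity)

lemma strictMonoOn_Efun (hβ : 0 ≤ β) {k p x : ℕ} (hp : 1 ≤ p) (hx : 2 * p + k ≤ x) {S : Set ℝ}
    (hS : Convex ℝ S) (hSJ : S ⊆ phiInterval β) (h : ∀ φ ∈ interior S, 0 < derivSign k φ β) :
    StrictMonoOn (fun t ↦ Efun x p t β) S := by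
  have hV : MonotoneOn (fun t ↦ (Vfun t β)⁻¹) S := fun t ht u hu htu ↦
    (sub_le_sub_iff_left 1).1 (antitoneOn_one_sub_inv_Vfun (hSJ ht) (hSJ hu) htu)
  simp only [Efun, zpow_neg, zpow_natCast, ← inv_pow]
  exact strictMonoOn_pow_mul_one_sub_pow ((monotoneOn_Ufun_div_Vfun hβ).mono hSJ)
    (fun t ht ↦ Ufun_div_Vfun_pos hβ (hSJ ht)) hV
    (fun t ht ↦ inv_pos.2 (Vfun_pos (hSJ ht)))
    (fun t ht ↦ (sub_pos.1 (one_sub_inv_Vfun_pos (hSJ ht))).le)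
    (Nat.le_sub_of_add_le' hx) (Nat.one_le_iff_ne_zero.1 hp)
    (strictMonoOn_pow_mul_one_sub_inv_Vfun hβ hS hSJ h)

lemma derivSign_three_pos (hβ : 1 / 8 < β) (hφ : φ ∈ phiInterval β) : 0 < derivSign 3 φ β := by
  obtain ⟨hr, hs⟩ := mem_phiInterval_iff.1 hφ
  have hc := beta₃_add_beta₂ φ β
  have hφ₁ := beta₂_add_two_mul φ β
  unfold derivSign Mfun
  generalize beta₃ φ β = r at *
  generalize beta₂ φ β = s at *
  have h7 : 0 < 7 * β - (r + s) := by linarith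
  have hφ_eq : 1 - φ = (s + 2 * β) / 3 := by linarith
  calc 0 < 3 / 7 * ((7 * β - (r + s)) * (2 * s ^ 2 + r * s + r ^ 2) +
        (r + s) * (3 * s - r) ^ 2) := by positivity
    _ = _ := by
      rw [hφ_eq, ← hc]
      push_cast
      ring

lemma three_mul_phiStar (hβ : β ≠ 2) :
    3 * phiStar β = 2 - β + (1 - β) * (5 + 2 * β - √3 * √(4 * β ^ 2 + 4 * β + 3)) /
      (4 * (2 - β)) := by
  have h : 2 - β ≠ 0 := sub_ne_zero.2 hβ.symm
  unfold phiStar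
  field_simp
  ring

lemma sq_sqrt_three_mul_sqrt (β : ℝ) :
    (√3 * √(4 * β ^ 2 + 4 * β + 3)) ^ 2 = 3 * (4 * β ^ 2 + 4 * β + 3) := by
  rw [mul_pow, Real.sq_sqrt zero_le_three, Real.sq_sqrt (by nlinarith [sq_nonneg (2 * β + 1)])]

lemma derivSign_one_pos (hβ : β < 1) (hφ : φ < phiStar β) : 0 < derivSign 1 φ β := by
  have hsq := sq_sqrt_three_mul_sqrt β
  have hroot := three_mul_phiStar (hβ.trans one_lt_two).ne
  have hz : 0 ≤ √3 * √(4 * β ^ 2 + 4 * β + 3) := by positivity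
  generalize √3 * √(4 * β ^ 2 + 4 * β + 3) = z at hsq hroot hz
  have h2 : 0 < 4 * (2 - β) := by linarith
  have hr : beta₃ φ β < (1 - β) * (5 + 2 * β - z) / (4 * (2 - β)) := by
    unfold beta₃
    linarith
  have hlt : (1 - β) * z < (1 - β) * (5 + 2 * β) - 4 * (2 - β) * beta₃ φ β := by
    rw [lt_div_iff₀ h2] at hr
    linarith
  have hsq_lt := pow_lt_pow_left₀ hlt (mul_nonneg (sub_pos.2 hβ).le hz) two_ne_zero
  have hcomplete : 8 * (2 - β) * derivSign 1 φ β =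
      ((1 - β) * (5 + 2 * β) - 4 * (2 - β) * beta₃ φ β) ^ 2 - ((1 - β) * z) ^ 2 := by
    rw [mul_pow (1 - β) z, hsq]
    unfold derivSign Mfun beta₃ beta₂
    push_cast
    ring
  exact pos_of_mul_pos_right (hcomplete ▸ sub_pos.2 hsq_lt) (by linarith)

theorem strictMonoOn_Efun_phiInterval (hβ : 1 / 8 < β) {p x : ℕ} (hp : 1 ≤ p)
    (hx : 2 * p + 3 ≤ x) : StrictMonoOn (fun t ↦ Efun x p t β) (phiInterval β) :=
  strictMonoOn_Efun (by linarith) hp hx (convex_Ioo _ _) subset_rfl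
    fun _ hφ ↦ derivSign_three_pos hβ (interior_subset hφ)

theorem strictMonoOn_Efun_phiInterval_inter_Iic (hβ : 0 ≤ β) {p x : ℕ} (hp : 1 ≤ p)
    (hx : 2 * p + 1 ≤ x) :
    StrictMonoOn (fun t ↦ Efun x p t β) (phiInterval β ∩ Set.Iic (phiStar β)) := by
  refine strictMonoOn_Efun hβ hp hx ((convex_Ioo _ _).inter (convex_Iic _))
    Set.inter_subset_left fun φ hφ ↦ ?_
  rw [interior_inter, interior_Iic] at hφ
  exact derivSign_one_pos (lt_one_of_mem_phiInterval (interior_subset hφ.1)) hφ.2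

end FixedBeta

section PhiStar

-- Rationalizing `φ*` leaves a quotient whose numerator decreases and whose denominator increases.
lemma phiStar_eq {β : ℝ} (h₀ : 0 ≤ β) (h₁ : β ≤ 1) :
    phiStar β = (2 - β) / 3 + 2 / 3 * ((1 - β ^ 2) /
      (5 + 2 * β + √3 * √(4 * β ^ 2 + 4 * β + 3))) := by
  have hsq := sq_sqrt_three_mul_sqrt β
  have hroot := three_mul_phiStar (h₁.trans_lt one_lt_two).ne
  have hz : 0 ≤ √3 * √(4 * β ^ 2 + 4 * β + 3) := by positivity
  generalize √3 * √(4 * β ^ 2 + 4 * β + 3) = z at hsq hroot hz ⊢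
  have hconj : (1 - β) * (5 + 2 * β - z) / (4 * (2 - β)) =
      2 * ((1 - β ^ 2) / (5 + 2 * β + z)) := by
    have h2 : 0 < 2 - β := by linarith
    field_simp
    linear_combination (-(1 - β)) * hsq
  linarith

lemma phiStar_zero : phiStar 0 = 3 / 4 := by
  rw [phiStar_eq le_rfl zero_le_one]
  norm_num

lemma phiStar_one : phiStar 1 = 1 / 3 := by
  rw [phiStar_eq zero_le_one le_rfl]
  norm_num

lemma strictAntiOn_phiStar : StrictAntiOn phiStar (Set.Icc 0 1) := by
  rintro a ⟨ha₀, ha₁⟩ b ⟨hb₀, hb₁⟩ hab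
  rw [phiStar_eq ha₀ ha₁, phiStar_eq hb₀ hb₁]
  have hsq : a ^ 2 ≤ b ^ 2 := pow_le_pow_left₀ ha₀ hab.le 2
  have hnum : 0 ≤ 1 - a ^ 2 := sub_nonneg.2 (pow_le_one₀ ha₀ ha₁)
  have hquot : (1 - b ^ 2) / (5 + 2 * b + √3 * √(4 * b ^ 2 + 4 * b + 3)) ≤
      (1 - a ^ 2) / (5 + 2 * a + √3 * √(4 * a ^ 2 + 4 * a + 3)) := by
    gcongr
  linarith

end PhiStar

theorem E_monotone_in_phi_fixed_beta_general :
    (∀ β₁ : ℝ, 1 / 8 < β₁ → ∀ p x : ℕ, 1 ≤ p → 2 * p + 3 ≤ x →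
        StrictMonoOn (fun t ↦ Efun x p t β₁) (phiInterval β₁)) ∧
      (∀ β₁ : ℝ, 0 ≤ β₁ → ∀ p x : ℕ, 1 ≤ p → 2 * p + 1 ≤ x →
        StrictMonoOn (fun t ↦ Efun x p t β₁) (phiInterval β₁ ∩ Set.Iic (phiStar β₁))) ∧
      StrictAntiOn phiStar (Set.Icc 0 1) ∧ phiStar 0 = 3 / 4 ∧ phiStar 1 = 1 / 3 :=
  ⟨fun _ hβ _ _ hp hx ↦ strictMonoOn_Efun_phiInterval hβ hp hx,
    fun _ hβ _ _ hp hx ↦ strictMonoOn_Efun_phiInterval_inter_Iic hβ hp hx,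
    strictAntiOn_phiStar, phiStar_zero, phiStar_one⟩

/-- monotonicity of `E_{x,p}(φ) = (U/V)^{x−2p}(1 − V^{−p})` at fixed
`β₁ ∈ [0.33018, 0.52891]` on `J_{β₁} = ((2 − β₁)/3, 1 − 2β₁/3)`: (i) strictly
increasing for `x ≥ 2p + 3`; (ii) strictly increasing on `J_{β₁} ∩ (−∞, φ*]` for
`x ∈ {2p+1, 2p+2}`.  Moreover `φ*` is decreasing on `[0,1]`, with `φ*(0) = 3/4` and
`φ*(1) = 1/3`. -/
theorem E_monotone_in_phi_fixed_beta :
    (∀ β₁ : ℝ, 0.33018 ≤ β₁ → β₁ ≤ 0.52891 →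
        (∀ p x : ℕ, 1 ≤ p → 2 * p + 3 ≤ x →
          StrictMonoOn
            (fun t : ℝ =>
              (Ufun t β₁ / Vfun t β₁) ^ (x - 2 * p) * (1 - (Vfun t β₁) ^ (-(p : ℤ))))
            (Set.Ioo ((2 - β₁) / 3) (1 - 2 * β₁ / 3))) ∧
        (∀ p x : ℕ, 1 ≤ p → (x = 2 * p + 1 ∨ x = 2 * p + 2) →
          StrictMonoOn
            (fun t : ℝ =>
              (Ufun t β₁ / Vfun t β₁) ^ (x - 2 * p) * (1 - (Vfun t β₁) ^ (-(p : ℤ))))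
            (Set.Ioo ((2 - β₁) / 3) (1 - 2 * β₁ / 3) ∩ Set.Iic (phiStar β₁)))) ∧
      StrictAntiOn phiStar (Set.Icc 0 1) ∧ phiStar 0 = 3 / 4 ∧ phiStar 1 = 1 / 3 := by
  obtain ⟨hJ, hIic, hphiStar⟩ := E_monotone_in_phi_fixed_beta_general
  exact ⟨fun β₁ hβ _ ↦ ⟨hJ β₁ (by norm_num at hβ ⊢; linarith), fun p x hp hx ↦
    hIic β₁ (by norm_num at hβ ⊢; linarith) p x hp (by omega)⟩, hphiStar⟩
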